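/- The two-setting two-outcome qubit assemblage defined by σ_{1|1} = 0.3 • |0⟩⟨0|, σ_{2|1} = 0.2 • |0⟩⟨0| + 0.5 • |1⟩⟨1|, σ_{1|2} = 0.3 • |+⟩⟨+|, σ_{2|2} = 0.2 • |+⟩⟨+| + 0.5 • |−⟩⟨−| is steerable, i.e. it is not unsteerable. Here |0⟩, |1⟩ is the standard basis of ℂ² and |±⟩ = (|0⟩ ± |1⟩)/√2. -/

import Mathlib

open scoped BigOperators Matrix ComplexOrder Kronecker ComplexConjugate

/-- A POVM on `ℂ^d` with outcome set `B`: positive semidefinite effects summing to `1`. -/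
def IsPOVM {d : ℕ} {B : Type} [Fintype B] (E : B → Matrix (Fin d) (Fin d) ℂ) : Prop :=
  (∀ b, (E b).PosSemidef) ∧ ∑ b, E b = 1

/-- A family of POVMs `E b y` (outcome `b`, setting `y`) on `ℂ^d` is jointly measurable
if it arises from a single POVM `G` by classical post-processing. -/
def JointlyMeasurable {d : ℕ} {B Y : Type} [Fintype B] [Fintype Y]
    (E : B → Y → Matrix (Fin d) (Fin d) ℂ) : Prop :=
  ∃ (n : ℕ) (G : Fin n → Matrix (Fin d) (Fin d) ℂ) (p : B → Y → Fin n → ℝ),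
    IsPOVM G ∧ (∀ b y l, 0 ≤ p b y l) ∧ (∀ y l, ∑ b, p b y l = 1) ∧
    (∀ b y, E b y = ∑ l, p b y l • G l)

/-- An assemblage `σ b y` on `ℂ^d` is unsteerable if it admits a local-hidden-state model. -/
def Unsteerable {d : ℕ} {B Y : Type} [Fintype B] [Fintype Y]
    (σ : B → Y → Matrix (Fin d) (Fin d) ℂ) : Prop :=
  ∃ (n : ℕ) (τ : Fin n → Matrix (Fin d) (Fin d) ℂ) (p : B → Y → Fin n → ℝ),
    (∀ l, (τ l).PosSemidef) ∧ (∑ l, (τ l).trace = 1) ∧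
    (∀ b y l, 0 ≤ p b y l) ∧ (∀ y l, ∑ b, p b y l = 1) ∧
    (∀ b y, σ b y = ∑ l, p b y l • τ l)

/-- `|0⟩`. -/
noncomputable def ket0 : Fin 2 → ℂ := ![1, 0]
/-- `|1⟩`. -/
noncomputable def ket1 : Fin 2 → ℂ := ![0, 1]
/-- `|+⟩ = (|0⟩ + |1⟩)/√2`. -/
noncomputable def ketP : Fin 2 → ℂ := ![(Real.sqrt 2 : ℂ)⁻¹, (Real.sqrt 2 : ℂ)⁻¹]
/-- `|−⟩ = (|0⟩ − |1⟩)/√2`. -/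
noncomputable def ketM : Fin 2 → ℂ := ![(Real.sqrt 2 : ℂ)⁻¹, -(Real.sqrt 2 : ℂ)⁻¹]

/-- `|ψ⟩⟨ψ|`. -/
noncomputable def proj (ψ : Fin 2 → ℂ) : Matrix (Fin 2) (Fin 2) ℂ :=
  Matrix.vecMulVec ψ (star ψ)

/-- The explicit two-setting two-outcome qubit assemblage
`σ_{1|1} = 0.3|0⟩⟨0|`, `σ_{2|1} = 0.2|0⟩⟨0| + 0.5|1⟩⟨1|`,
`σ_{1|2} = 0.3|+⟩⟨+|`, `σ_{2|2} = 0.2|+⟩⟨+| + 0.5|−⟩⟨−|`,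
with outcome `b : Fin 2` (0 ↦ 1, 1 ↦ 2) and setting `y : Fin 2` (0 ↦ 1, 1 ↦ 2). -/
noncomputable def exampleAssemblage : Fin 2 → Fin 2 → Matrix (Fin 2) (Fin 2) ℂ :=
  fun b y =>
    if y = 0 then
      if b = 0 then (0.3 : ℝ) • proj ket0
      else (0.2 : ℝ) • proj ket0 + (0.5 : ℝ) • proj ket1
    else
      if b = 0 then (0.3 : ℝ) • proj ketP
      else (0.2 : ℝ) • proj ketP + (0.5 : ℝ) • proj ketM

/-! If the kernels of two states of an unsteerable assemblage together span the space, then no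
nonzero hidden state contributes to both, so the sum of the two states is bounded by the reduced
state. Here `σ_{1|1}` and `σ_{1|2}` are multiples of the distinct pure states `|0⟩⟨0|` and
`|+⟩⟨+|`, and their sum has largest eigenvalue `0.3 (1 + 1/√2) > 0.5`, whereas the reduced state
is `0.5 • 1`. -/

open LinearMap (ker)
open scoped MatrixOrder

lemma ker_mulVecLin_smul {S R m n : Type*} [CommSemiring R] [Fintype n] [DivisionRing S]
    [Module S R] [IsScalarTower S R R] (A : Matrix m n R) {c : S} (hc : c ≠ 0) :
    ker (c • A).mulVecLin = ker A.mulVecLin := by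
  ext x
  simp only [LinearMap.mem_ker, Matrix.mulVecLin_apply, Matrix.smul_mulVec,
    smul_eq_zero_iff_right hc]

section LoewnerOrder

variable {𝕜 n : Type*} [RCLike 𝕜] [Fintype n] {A B : Matrix n n 𝕜}

lemma ker_mulVecLin_le_of_le (hA : A.PosSemidef) (hAB : A ≤ B) :
    ker B.mulVecLin ≤ ker A.mulVecLin := by
  intro x hBx
  rw [LinearMap.mem_ker, Matrix.mulVecLin_apply] at hBx ⊢
  have hA_form : 0 ≤ star x ⬝ᵥ A *ᵥ x := hA.dotProduct_mulVec_nonneg x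
  have hBA_form : 0 ≤ star x ⬝ᵥ (B - A) *ᵥ x :=
    (Matrix.le_iff.1 hAB).dotProduct_mulVec_nonneg x
  rw [Matrix.sub_mulVec, hBx, zero_sub, dotProduct_neg, neg_nonneg] at hBA_form
  exact (hA.dotProduct_mulVec_zero_iff x).1 (le_antisymm hBA_form hA_form)

lemma smul_add_smul_le_of_ker_sup_ker_eq_top (hA : A.PosSemidef) {c c' : ℝ}
    (hc : c ≤ 1) (hc' : c' ≤ 1)
    (hker : ker (c • A).mulVecLin ⊔ ker (c' • A).mulVecLin = ⊤) : c • A + c' • A ≤ A := by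
  rcases eq_or_ne c 0 with rfl | hc₀
  · simpa only [zero_smul, zero_add] using smul_le_of_le_one_left hA.nonneg hc'
  rcases eq_or_ne c' 0 with rfl | hc'₀
  · simpa only [zero_smul, add_zero] using smul_le_of_le_one_left hA.nonneg hc
  have hA_ker : ker A.mulVecLin = ⊤ := by
    rwa [ker_mulVecLin_smul A hc₀, ker_mulVecLin_smul A hc'₀, sup_idem] at hker
  have hA_zero : A = 0 := by
    classical
    exact Matrix.toLin'.map_eq_zero_iff.1 (LinearMap.ker_eq_top.1 hA_ker)
  simp only [hA_zero, smul_zero, add_zero, le_refl]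

end LoewnerOrder

theorem Unsteerable.add_le_sum_of_ker_sup_ker_eq_top {d : ℕ} {B Y : Type} [Fintype B] [Fintype Y]
    {σ : B → Y → Matrix (Fin d) (Fin d) ℂ} (hσ : Unsteerable σ) {b b' : B} {y y' : Y}
    (hker : ker (σ b y).mulVecLin ⊔ ker (σ b' y').mulVecLin = ⊤) (z : Y) :
    σ b y + σ b' y' ≤ ∑ a, σ a z := by
  obtain ⟨n, τ, p, hτ, -, hp, hp_sum, hσ_eq⟩ := hσ
  have hp_le_one (a : B) (x : Y) (l : Fin n) : p a x l ≤ 1 :=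
    hp_sum x l ▸ Finset.single_le_sum (fun a _ ↦ hp a x l) (Finset.mem_univ a)
  have hker_le (a : B) (x : Y) (l : Fin n) :
      ker (σ a x).mulVecLin ≤ ker (p a x l • τ l).mulVecLin := by
    have hterm (k : Fin n) : (p a x k • τ k).PosSemidef := (hτ k).smul (hp a x k)
    refine ker_mulVecLin_le_of_le (hterm l) ?_
    rw [hσ_eq]
    exact Finset.single_le_sum (fun k _ ↦ (hterm k).nonneg) (Finset.mem_univ l)
  have hreduced : ∑ a, σ a z = ∑ l, τ l := by
    simp only [hσ_eq]
    rw [Finset.sum_comm]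
    simp only [← Finset.sum_smul, hp_sum, one_smul]
  rw [hreduced, hσ_eq b y, hσ_eq b' y', ← Finset.sum_add_distrib]
  refine Finset.sum_le_sum fun l _ ↦ smul_add_smul_le_of_ker_sup_ker_eq_top (hτ l)
    (hp_le_one b y l) (hp_le_one b' y' l) ?_
  exact top_le_iff.1 (hker.ge.trans (sup_le_sup (hker_le b y l) (hker_le b' y' l)))

lemma proj_ket0 : proj ket0 = !![1, 0; 0, 0] := by
  ext i j
  fin_cases i <;> fin_cases j <;> simp [proj, ket0, Matrix.vecMulVec_apply]

lemma proj_ket1 : proj ket1 = !![0, 0; 0, 1] := by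
  ext i j
  fin_cases i <;> fin_cases j <;> simp [proj, ket1, Matrix.vecMulVec_apply]

lemma proj_ketP : proj ketP = (2⁻¹ : ℂ) • !![1, 1; 1, 1] := by
  have hsqrt : (√2 : ℂ)⁻¹ * (√2 : ℂ)⁻¹ = 2⁻¹ := by
    rw [← mul_inv, ← Complex.ofReal_mul, Real.mul_self_sqrt zero_le_two, Complex.ofReal_ofNat]
  ext i j
  fin_cases i <;> fin_cases j <;> simp [proj, ketP, Matrix.vecMulVec_apply, hsqrt]

lemma exampleAssemblage_zero_zero : exampleAssemblage 0 0 = (0.3 : ℝ) • !![1, 0; 0, 0] := by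
  simp only [exampleAssemblage, if_true, proj_ket0]

lemma exampleAssemblage_zero_one :
    exampleAssemblage 0 1 = (0.3 : ℝ) • (2⁻¹ : ℂ) • !![1, 1; 1, 1] := by
  simp only [exampleAssemblage, one_ne_zero, if_false, if_true, proj_ketP]

lemma sum_exampleAssemblage_zero : ∑ b, exampleAssemblage b 0 = (0.5 : ℝ) • 1 := by
  have hket : proj ket0 + proj ket1 = 1 := by
    rw [proj_ket0, proj_ket1, Matrix.one_fin_two]
    simp
  simp only [Fin.sum_univ_two, exampleAssemblage, one_ne_zero, if_false, if_true]
  rw [← hket]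
  module

lemma ker_exampleAssemblage_sup_ker_eq_top :
    ker (exampleAssemblage 0 0).mulVecLin ⊔ ker (exampleAssemblage 0 1).mulVecLin = ⊤ := by
  refine eq_top_iff.2 fun x _ ↦ Submodule.mem_sup.2 ⟨![0, x 0 + x 1], ?_, ![x 0, -x 0], ?_, ?_⟩
  · rw [exampleAssemblage_zero_zero, LinearMap.mem_ker, Matrix.mulVecLin_apply]
    ext i
    fin_cases i <;> simp [Matrix.mulVec, dotProduct]
  · rw [exampleAssemblage_zero_one, LinearMap.mem_ker, Matrix.mulVecLin_apply]
    ext i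
    fin_cases i <;> simp [Matrix.mulVec, dotProduct]
  · ext i
    fin_cases i <;> simp

lemma not_exampleAssemblage_add_le_sum :
    ¬ exampleAssemblage 0 0 + exampleAssemblage 0 1 ≤ ∑ b, exampleAssemblage b 0 := by
  intro hle
  -- `(2, 1)` approximates the top eigenvector `(1 + √2, 1)` of `|0⟩⟨0| + |+⟩⟨+|`.
  have hform_nonneg := (Matrix.le_iff.1 hle).re_dotProduct_nonneg ![2, 1]
  have hform_eq : RCLike.re (star ![2, 1] ⬝ᵥ (∑ b, exampleAssemblage b 0 -
      (exampleAssemblage 0 0 + exampleAssemblage 0 1)) *ᵥ ![2, 1]) = (-0.05 : ℝ) := by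
    rw [exampleAssemblage_zero_zero, exampleAssemblage_zero_one, sum_exampleAssemblage_zero]
    norm_num [Matrix.sub_mulVec, Matrix.smul_mulVec, dotProduct, Fin.sum_univ_two]
  rw [hform_eq] at hform_nonneg
  norm_num at hform_nonneg

/-- the explicit assemblage is steerable (not unsteerable). -/
theorem exampleAssemblage_steerable : ¬ Unsteerable exampleAssemblage :=
  fun h ↦ not_exampleAssemblage_add_le_sum
    (h.add_le_sum_of_ker_sup_ker_eq_top ker_exampleAssemblage_sup_ker_eq_top 0)
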